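/- There exist universal constants c₁, c₂, c₃ > 0 such that for every finite weighted graph G=(V,E) and every integer k ≥ 1 with k+1 ≤ |V|: if λ_{k+1} ≥ c₁·k²·√λ_k, then there exists a partition of V into k nonempty sets P_1,…,P_k such that for every 1 ≤ i ≤ k: φ(G[P_i]) ≥ c₂·λ_{k+1}/k and φ_G(P_i) ≤ c₃·k³·√λ_k. -/

import Mathlib

open Finset

/-- Weighted degree of a vertex. -/
noncomputable def deg {V : Type*} [Fintype V] (w : V → V → ℝ) (v : V) : ℝ :=
  ∑ u, w v u

/-- Volume of a set of vertices. -/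
noncomputable def vol {V : Type*} [Fintype V] (w : V → V → ℝ) (S : Finset V) : ℝ :=
  ∑ v ∈ S, deg w v

/-- Total weight of edges from `S` to `T \ S`. -/
noncomputable def eW {V : Type*} [DecidableEq V] (w : V → V → ℝ) (S T : Finset V) : ℝ :=
  ∑ u ∈ S, ∑ v ∈ T \ S, w u v

/-- Conductance of `S` in `G`. -/
noncomputable def phi {V : Type*} [Fintype V] [DecidableEq V] (w : V → V → ℝ)
    (S : Finset V) : ℝ :=
  eW w S Finset.univ / vol w S

/-- Volume of `S ⊆ P` inside the induced subgraph `G[P]`. -/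
noncomputable def volIn {V : Type*} [DecidableEq V] (w : V → V → ℝ) (P S : Finset V) : ℝ :=
  ∑ v ∈ S, ∑ u ∈ P, w v u

/-- `φ(G[P]) ≥ a` : every nonempty proper `S ⊊ P` with at most half of the induced volume
has induced conductance at least `a` (stated multiplicatively). -/
def inCondGE {V : Type*} [DecidableEq V] (w : V → V → ℝ) (P : Finset V) (a : ℝ) : Prop :=
  ∀ S : Finset V, S ⊆ P → S.Nonempty → S ≠ P →
    volIn w P S ≤ volIn w P P / 2 → a * volIn w P S ≤ eW w S P

/-- `ρ(k)`: the minimum over families of `k` pairwise disjoint nonempty subsets of the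
maximum conductance. -/
noncomputable def rho {V : Type*} [Fintype V] [DecidableEq V] (w : V → V → ℝ) (k : ℕ) : ℝ :=
  sInf { r | ∃ A : Fin k → Finset V, (∀ i, (A i).Nonempty) ∧
    (∀ i j, i ≠ j → Disjoint (A i) (A j)) ∧ r = ⨆ i, phi w (A i) }

/-- The normalized Laplacian `I - D^{-1/2} A D^{-1/2}`. -/
noncomputable def normLap {V : Type*} [Fintype V] [DecidableEq V] (w : V → V → ℝ) : Matrix V V ℝ :=
  1 - Matrix.of fun u v => w u v / (Real.sqrt (deg w u) * Real.sqrt (deg w v))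

/-- `lam w k` is the `k`-th smallest eigenvalue (1-indexed) of the normalized Laplacian. -/
noncomputable def lam {V : Type*} [Fintype V] [DecidableEq V] (w : V → V → ℝ) (k : ℕ) : ℝ :=
  if h : (normLap w).IsHermitian then
    ((Finset.univ.val.map h.eigenvalues).sort (· ≤ ·)).getD (k - 1) 0
  else 0

lemma lap_quad {V : Type} [Fintype V] [DecidableEq V] (w : V → V → ℝ)
    (hs : ∀ u v, w u v = w v u) (hd : ∀ v, 0 < deg w v) (f : V → ℝ) :
    (fun v => √(deg w v) * f v) ⬝ᵥ (normLap w).mulVec (fun v => √(deg w v) * f v)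
      = ∑ u, ∑ v, w u v * (f u - f v) ^ 2 / 2 := by
  have hq : ∀ v, √(deg w v) ≠ 0 := fun v => (Real.sqrt_pos.2 (hd v)).ne'
  have h1 : (fun v => √(deg w v) * f v) ⬝ᵥ (normLap w).mulVec (fun v => √(deg w v) * f v)
      = ∑ v, deg w v * f v ^ 2 - ∑ u, ∑ v, w u v * (f u * f v) := by
    unfold normLap
    rw [Matrix.sub_mulVec, Matrix.one_mulVec, dotProduct_sub]
    congr 1
    · simp only [dotProduct]
      refine Finset.sum_congr rfl fun v _ => ?_
      have := Real.mul_self_sqrt (hd v).le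
      linear_combination (f v ^ 2) * this
    · simp only [dotProduct, Matrix.mulVec, Matrix.of_apply, Finset.mul_sum]
      refine Finset.sum_congr rfl fun u _ => Finset.sum_congr rfl fun v _ => ?_
      have := hq u
      have := hq v
      field_simp
  have h2 : ∑ u, ∑ v, w u v * f u ^ 2 = ∑ v, deg w v * f v ^ 2 := by
    simp only [deg, Finset.sum_mul]
  have h3 : ∑ u, ∑ v, w u v * f v ^ 2 = ∑ v, deg w v * f v ^ 2 := by
    rw [← h2, Finset.sum_comm]
    exact Finset.sum_congr rfl fun u _ => Finset.sum_congr rfl fun v _ => by rw [hs]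
  have h4 : ∑ u, ∑ v, w u v * (f u - f v) ^ 2 / 2 =
      (∑ u, ∑ v, w u v * f u ^ 2) / 2 + (∑ u, ∑ v, w u v * f v ^ 2) / 2
        - ∑ u, ∑ v, w u v * (f u * f v) := by
    simp only [Finset.sum_div, ← Finset.sum_add_distrib, ← Finset.sum_sub_distrib]
    exact Finset.sum_congr rfl fun u _ => Finset.sum_congr rfl fun v _ => by ring
  rw [h1, h4, h2, h3]; ring

lemma normLap_herm {V : Type} [Fintype V] [DecidableEq V] (w : V → V → ℝ)
    (hs : ∀ u v, w u v = w v u) : (normLap w).IsHermitian := by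
  unfold normLap
  refine Matrix.IsHermitian.sub Matrix.isHermitian_one ?_
  ext u v
  simp [Matrix.conjTranspose_apply, hs u v, mul_comm]

lemma spec {V : Type} [Fintype V] [DecidableEq V] (w : V → V → ℝ)
    (hs : ∀ u v, w u v = w v u) (hd : ∀ v, 0 < deg w v) :
    ∃ (μ : Fin (Fintype.card V) → ℝ) (b : Fin (Fintype.card V) → V → ℝ), Monotone μ ∧
      (∀ i, lam w (i.val + 1) = μ i) ∧
      (∀ f : V → ℝ, ∑ i, (∑ v, b i v * f v) ^ 2 = ∑ v, deg w v * f v ^ 2) ∧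
      (∀ f : V → ℝ, ∑ i, μ i * (∑ v, b i v * f v) ^ 2
        = ∑ u, ∑ v, w u v * (f u - f v) ^ 2 / 2) := by
  have H := normLap_herm w hs
  let e := (Fintype.equivFin V).symm
  let σ : Fin (Fintype.card V) ≃ V := (Tuple.sort (H.eigenvalues ∘ e)).trans e
  have hm : Monotone (H.eigenvalues ∘ σ) := Tuple.monotone_sort (H.eigenvalues ∘ e)
  let o := H.eigenvectorBasis
  have hin : ∀ (i : V) (f : V → ℝ),
      inner ℝ (o i) (WithLp.toLp 2 (fun v => √(deg w v) * f v) : EuclideanSpace ℝ V)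
        = ∑ v, (o i v * √(deg w v)) * f v := by
    intro i f
    rw [EuclideanSpace.inner_eq_star_dotProduct]
    simp only [dotProduct]
    refine Finset.sum_congr rfl fun v _ => ?_
    simp
    ring
  refine ⟨H.eigenvalues ∘ σ, fun i v => o (σ i) v * √(deg w v), hm, ?_, ?_, ?_⟩
  · intro i
    unfold lam
    rw [dif_pos H]
    have : (Finset.univ.val.map H.eigenvalues).sort (· ≤ ·) = List.ofFn (H.eigenvalues ∘ σ) := by
      apply List.Perm.eq_of_pairwise' (r := (· ≤ ·))
      · exact Multiset.pairwise_sort _ _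
      · exact hm.sortedLE_ofFn.pairwise
      · rw [← Multiset.coe_eq_coe, Multiset.sort_eq]
        have h2 : (Finset.univ : Finset V).val = (Finset.univ : Finset (Fin (Fintype.card V))).val.map σ := by
          have := Finset.map_univ_equiv σ
          rw [← this]; rfl
        rw [h2, Multiset.map_map, List.ofFn_eq_map]
        rfl
    rw [this]
    simp
  · intro f
    have h := o.sum_sq_norm_inner_right (WithLp.toLp 2 (fun v => √(deg w v) * f v))
    rw [EuclideanSpace.norm_sq_eq] at h
    simp only [hin] at h
    rw [Equiv.sum_comp σ (fun i => (∑ v, o i v * √(deg w v) * f v) ^ 2)]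
    simp only [Real.norm_eq_abs, sq_abs] at h
    rw [h]
    refine Finset.sum_congr rfl fun v _ => ?_
    rw [mul_pow, Real.sq_sqrt (hd v).le]
  · intro f
    rw [← lap_quad w hs hd f]
    set x : V → ℝ := fun v => √(deg w v) * f v with hx
    have h := o.sum_inner_mul_inner (WithLp.toLp 2 x) (WithLp.toLp 2 ((normLap w).mulVec x))
    have h5 : ∀ i, inner ℝ (o i) (WithLp.toLp 2 ((normLap w).mulVec x) : EuclideanSpace ℝ V)
        = H.eigenvalues i * ∑ v, (o i v * √(deg w v)) * f v := by
      intro i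
      rw [← hin, EuclideanSpace.inner_eq_star_dotProduct, EuclideanSpace.inner_eq_star_dotProduct]
      have h6 := H.mulVec_eigenvectorBasis i
      have h7 : (normLap w).transpose = normLap w := by
        have := H.eq
        rwa [Matrix.conjTranspose_eq_transpose_of_trivial] at this
      simp only [star_trivial]
      rw [dotProduct_comm, Matrix.dotProduct_mulVec, ← Matrix.mulVec_transpose, h7]
      change (normLap w).mulVec (H.eigenvectorBasis i).ofLp ⬝ᵥ x = _
      rw [h6, smul_dotProduct, smul_eq_mul, dotProduct_comm]
    have h8 : inner ℝ (WithLp.toLp 2 x : EuclideanSpace ℝ V) (WithLp.toLp 2 ((normLap w).mulVec x))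
        = x ⬝ᵥ (normLap w).mulVec x := by
      rw [EuclideanSpace.inner_eq_star_dotProduct]
      simp [dotProduct_comm]
    rw [← h8, ← h, ← Equiv.sum_comp σ]
    refine Finset.sum_congr rfl fun i _ => ?_
    rw [h5, real_inner_comm, hin]
    simp only [Function.comp]
    ring

/-- linear algebra: fewer homogeneous equations than unknowns. -/
lemma exists_null {ι κ : Type} [Fintype ι] [Fintype κ] (h : Fintype.card κ < Fintype.card ι)
    (a : κ → ι → ℝ) : ∃ x : ι → ℝ, x ≠ 0 ∧ ∀ j, ∑ i, a j i * x i = 0 := by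
  have := LinearMap.ker_ne_bot_of_finrank_lt (K := ℝ) (f := Matrix.mulVecLin (Matrix.of a))
    (by simpa using h)
  obtain ⟨x, hx, hx0⟩ := (Submodule.ne_bot_iff _).1 this
  refine ⟨x, hx0, fun j => ?_⟩
  have := congrFun (LinearMap.mem_ker.1 hx) j
  simpa [Matrix.mulVec, dotProduct] using this

/-- Dirichlet form. -/
noncomputable def dir {V : Type} [Fintype V] (w : V → V → ℝ) (f : V → ℝ) : ℝ :=
  ∑ u, ∑ v, w u v * (f u - f v) ^ 2 / 2

lemma lam_upper {V : Type} [Fintype V] [DecidableEq V] (w : V → V → ℝ)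
    (hs : ∀ u v, w u v = w v u) (hd : ∀ v, 0 < deg w v) (m : ℕ) (hm : m < Fintype.card V)
    (g : Fin (m + 1) → V → ℝ) :
    ∃ c : Fin (m + 1) → ℝ, c ≠ 0 ∧
      lam w (m + 1) * ∑ v, deg w v * (∑ i, c i * g i v) ^ 2
        ≤ dir w (fun v => ∑ i, c i * g i v) := by
  obtain ⟨μ, b, hmono, hlam, hpars, hquad⟩ := spec w hs hd
  obtain ⟨c, hc, hz⟩ := exists_null (ι := Fin (m + 1)) (κ := Fin m) (by simp)
    (fun j i => ∑ v, b ⟨j, j.2.trans hm⟩ v * g i v)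
  refine ⟨c, hc, ?_⟩
  rw [dir, ← hquad, ← hpars, hlam ⟨m, hm⟩, Finset.mul_sum]
  refine Finset.sum_le_sum fun i _ => ?_
  by_cases h : i.val < m
  · have h0 : ∑ v, b i v * ∑ j, c j * g j v = 0 := by
      rw [← hz ⟨i, h⟩]
      simp only [Finset.mul_sum, Finset.sum_mul]
      rw [Finset.sum_comm]
      exact Finset.sum_congr rfl fun u _ => Finset.sum_congr rfl fun v _ => by ring
    rw [h0]; simp
  · exact mul_le_mul_of_nonneg_right (hmono (by rw [Fin.le_def]; simpa using h)) (sq_nonneg _)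

lemma lam_lower {V : Type} [Fintype V] [DecidableEq V] (w : V → V → ℝ)
    (hs : ∀ u v, w u v = w v u) (hd : ∀ v, 0 < deg w v) (m : ℕ) (hm : m < Fintype.card V)
    (a : Fin m → V → ℝ) :
    ∃ f : V → ℝ, f ≠ 0 ∧ (∀ j, ∑ v, a j v * f v = 0) ∧
      dir w f ≤ lam w (m + 1) * ∑ v, deg w v * f v ^ 2 := by
  obtain ⟨μ, b, hmono, hlam, hpars, hquad⟩ := spec w hs hd
  obtain ⟨f, hf, hz⟩ := exists_null (ι := V) (κ := Fin m ⊕ Fin (Fintype.card V - m - 1))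
    (by simp; omega)
    (Sum.elim a (fun j => b ⟨m + 1 + j, by omega⟩))
  refine ⟨f, hf, fun j => hz (Sum.inl j), ?_⟩
  rw [dir, ← hquad, ← hpars, hlam ⟨m, hm⟩, Finset.mul_sum]
  refine Finset.sum_le_sum fun i _ => ?_
  by_cases h : m < i.val
  · have h0 := hz (Sum.inr ⟨i.val - m - 1, by omega⟩)
    have h1 : (⟨m + 1 + (i.val - m - 1), by omega⟩ : Fin (Fintype.card V)) = i := by
      ext; simp; omega
    simp only [Sum.elim_inr, h1] at h0
    rw [h0]; simp
  · exact mul_le_mul_of_nonneg_right (hmono (by rw [Fin.le_def]; simpa using h)) (sq_nonneg _)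

lemma lam_mono {V : Type} [Fintype V] [DecidableEq V] (w : V → V → ℝ)
    (hs : ∀ u v, w u v = w v u) (hd : ∀ v, 0 < deg w v) (i j : ℕ) (hij : i ≤ j)
    (hj : j < Fintype.card V) : lam w (i + 1) ≤ lam w (j + 1) := by
  obtain ⟨μ, b, hmono, hlam, -⟩ := spec w hs hd
  have h1 := hlam ⟨i, by omega⟩
  have h2 := hlam ⟨j, hj⟩
  simp only at h1 h2
  rw [h1, h2]
  exact hmono hij

lemma norm_pos {V : Type} [Fintype V] (w : V → V → ℝ)
    (hd : ∀ v, 0 < deg w v) (f : V → ℝ) (hf : f ≠ 0) : 0 < ∑ v, deg w v * f v ^ 2 := by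
  obtain ⟨v, hv⟩ := Function.ne_iff.1 hf
  exact Finset.sum_pos' (fun u _ => mul_nonneg (hd u).le (sq_nonneg _))
    ⟨v, Finset.mem_univ _, mul_pos (hd v) (by simp at hv; positivity)⟩

lemma lam_nonneg {V : Type} [Fintype V] [DecidableEq V] (w : V → V → ℝ)
    (hs : ∀ u v, w u v = w v u) (hn : ∀ u v, 0 ≤ w u v) (hd : ∀ v, 0 < deg w v)
    (m : ℕ) (hm : m < Fintype.card V) : 0 ≤ lam w (m + 1) := by
  obtain ⟨f, hf, -, h⟩ := lam_lower w hs hd m hm (fun _ _ => 0)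
  have h1 : 0 ≤ dir w f := Finset.sum_nonneg fun u _ => Finset.sum_nonneg fun v _ => by
    have := hn u v; positivity
  exact nonneg_of_mul_nonneg_left (h1.trans h) (norm_pos w hd f hf)

/-- total weight from S to T -/
noncomputable def ct {V : Type} (w : V → V → ℝ) (S T : Finset V) : ℝ :=
  ∑ u ∈ S, ∑ v ∈ T, w u v

lemma eW_eq {V : Type} [DecidableEq V] (w : V → V → ℝ) (S T : Finset V) :
    eW w S T = ct w S (T \ S) := rfl

lemma vol_eq {V : Type} [Fintype V] (w : V → V → ℝ) (S : Finset V) :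
    vol w S = ct w S Finset.univ := rfl

lemma ct_union_right {V : Type} [DecidableEq V] (w : V → V → ℝ) (S T U : Finset V)
    (h : Disjoint T U) : ct w S (T ∪ U) = ct w S T + ct w S U := by
  simp only [ct, Finset.sum_union h, Finset.sum_add_distrib]

lemma ct_union_left {V : Type} [DecidableEq V] (w : V → V → ℝ) (S T U : Finset V)
    (h : Disjoint S T) : ct w (S ∪ T) U = ct w S U + ct w T U := by
  simp only [ct, Finset.sum_union h]

lemma ct_comm {V : Type} (w : V → V → ℝ) (hs : ∀ u v, w u v = w v u) (S T : Finset V) :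
    ct w S T = ct w T S := by
  rw [ct, Finset.sum_comm]
  exact Finset.sum_congr rfl fun u _ => Finset.sum_congr rfl fun v _ => hs _ _

lemma ct_nonneg {V : Type} (w : V → V → ℝ) (hn : ∀ u v, 0 ≤ w u v) (S T : Finset V) :
    0 ≤ ct w S T := Finset.sum_nonneg fun _ _ => Finset.sum_nonneg fun _ _ => hn _ _

lemma ct_mono {V : Type} (w : V → V → ℝ) (hn : ∀ u v, 0 ≤ w u v) {S S' T T' : Finset V}
    (h : S ⊆ S') (h' : T ⊆ T') : ct w S T ≤ ct w S' T' := by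
  refine (Finset.sum_le_sum fun u _ =>
    Finset.sum_le_sum_of_subset_of_nonneg h' fun _ _ _ => hn _ _).trans ?_
  exact Finset.sum_le_sum_of_subset_of_nonneg h
    fun _ _ _ => Finset.sum_nonneg fun _ _ => hn _ _

lemma vol_pos {V : Type} [Fintype V] (w : V → V → ℝ) (hd : ∀ v, 0 < deg w v) (S : Finset V)
    (h : S.Nonempty) : 0 < vol w S := Finset.sum_pos (fun v _ => hd v) h

/-- easy direction: disjoint sparse sets bound the eigenvalue. -/
lemma lam_le_of_sets {V : Type} [Fintype V] [DecidableEq V] (w : V → V → ℝ)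
    (hs : ∀ u v, w u v = w v u) (hn : ∀ u v, 0 ≤ w u v) (hd : ∀ v, 0 < deg w v)
    (m : ℕ) (hm : m < Fintype.card V) (A : Fin (m + 1) → Finset V)
    (hne : ∀ i, (A i).Nonempty) (hdis : ∀ i j, i ≠ j → Disjoint (A i) (A j)) (s : ℝ)
    (hphi : ∀ i, phi w (A i) ≤ s) : lam w (m + 1) ≤ 2 * s := by
  obtain ⟨c, hc, h⟩ := lam_upper w hs hd m hm (fun i v => if v ∈ A i then 1 else 0)
  set f : V → ℝ := fun v => ∑ i, c i * (if v ∈ A i then 1 else 0) with hf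
  have hfv : ∀ i, ∀ v ∈ A i, f v = c i := by
    intro i v hv
    rw [hf]
    simp only
    rw [Finset.sum_eq_single i]
    · simp [hv]
    · intro j _ hj
      have := Finset.disjoint_left.1 (hdis i j hj.symm) hv
      simp [this]
    · simp
  have hfn : ∀ v, (∀ i, v ∉ A i) → f v = 0 := by
    intro v hv; simp [hf, hv]
  have hf0 : f ≠ 0 := by
    obtain ⟨i, hi⟩ := Function.ne_iff.1 hc
    obtain ⟨v, hv⟩ := hne i
    intro h0
    apply hi
    rw [← hfv i v hv, h0]; rfl
  have hsplit : ∀ g : V → ℝ, ∑ v, g v * f v ^ 2 = ∑ i, c i ^ 2 * ∑ v ∈ A i, g v := by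
    intro g
    have : ∀ v, g v * f v ^ 2 = ∑ i, c i ^ 2 * (if v ∈ A i then g v else 0) := by
      intro v
      by_cases hv : ∃ i, v ∈ A i
      · obtain ⟨i, hi⟩ := hv
        rw [hfv i v hi, Finset.sum_eq_single i]
        · simp [hi]; ring
        · intro j _ hj
          have := Finset.disjoint_left.1 (hdis i j hj.symm) hi
          simp [this]
        · simp
      · push Not at hv
        rw [hfn v hv]; simp [hv]
    simp only [this]
    rw [Finset.sum_comm]
    refine Finset.sum_congr rfl fun i _ => ?_
    rw [← Finset.mul_sum]
    simp [Finset.sum_ite_mem]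
  have hN := norm_pos w hd f hf0
  -- same-class predicate
  let K : V → V → ℝ := fun u v => if ∃ i, u ∈ A i ∧ v ∈ A i then 0 else 1
  have hK : ∀ u v, K u v = K v u := by
    intro u v; simp only [K, and_comm]
  have hE : dir w f ≤ 2 * ∑ u, (∑ v, w u v * K u v) * f u ^ 2 := by
    have h1 : dir w f ≤ ∑ u, ∑ v, (w u v * K u v * f u ^ 2 + w u v * K u v * f v ^ 2) := by
      refine Finset.sum_le_sum fun u _ => Finset.sum_le_sum fun v _ => ?_
      by_cases hh : ∃ i, u ∈ A i ∧ v ∈ A i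
      · obtain ⟨i, hi, hj⟩ := hh
        have : K u v = 0 := if_pos ⟨i, hi, hj⟩
        rw [hfv i u hi, hfv i v hj, this]; simp
      · have : K u v = 1 := if_neg hh
        rw [this]
        nlinarith [mul_nonneg (hn u v) (sq_nonneg (f u + f v))]
    have h2 : ∑ u, ∑ v, w u v * K u v * f v ^ 2 = ∑ u, ∑ v, w u v * K u v * f u ^ 2 := by
      rw [Finset.sum_comm]
      exact Finset.sum_congr rfl fun u _ => Finset.sum_congr rfl fun v _ => by rw [hs, hK]
    simp only [Finset.sum_add_distrib] at h1
    rw [h2] at h1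
    simp only [Finset.sum_mul]
    linarith
  have hB : ∑ u, (∑ v, w u v * K u v) * f u ^ 2 ≤ s * ∑ v, deg w v * f v ^ 2 := by
    rw [hsplit, hsplit, Finset.mul_sum]
    refine Finset.sum_le_sum fun i _ => ?_
    have h1 : ∑ u ∈ A i, ∑ v, w u v * K u v ≤ eW w (A i) Finset.univ := by
      rw [eW]
      refine Finset.sum_le_sum fun u hu => ?_
      rw [← Finset.sum_subset (Finset.subset_univ (Finset.univ \ A i))]
      · refine Finset.sum_le_sum fun v _ => ?_
        have : K u v ≤ 1 := by simp only [K]; split_ifs <;> norm_num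
        nlinarith [hn u v]
      · intro v _ hv
        have : K u v = 0 := if_pos ⟨i, hu, by simpa using hv⟩
        rw [this]; simp
    have h2 : eW w (A i) Finset.univ ≤ s * ∑ v ∈ A i, deg w v :=
      (div_le_iff₀ (vol_pos w hd _ (hne i))).1 (hphi i)
    nlinarith [sq_nonneg (c i), mul_le_mul_of_nonneg_left (h1.trans h2) (sq_nonneg (c i))]
  refine le_of_mul_le_mul_right ?_ hN
  linarith

lemma layer {V : Type} [Fintype V] [DecidableEq V] (w : V → V → ℝ)
    (P : Finset V) (α : ℝ) :
    ∀ (n : ℕ) (q : V → ℝ), (P.filter (fun v => 0 < q v)).card = n → (∀ v ∈ P, 0 ≤ q v) →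
      (∀ S ⊆ P, (∀ v ∈ S, 0 < q v) → α * vol w S ≤ ct w S (P \ S)) →
      α * ∑ v ∈ P, deg w v * q v ≤ ∑ u ∈ P, ∑ v ∈ P, w u v * max (q u - q v) 0 := by
  intro n
  induction n using Nat.strong_induction_on with
  | _ n ih =>
    intro q hcard hq hS
    set S := P.filter (fun v => 0 < q v) with hSdef
    by_cases hne : S.Nonempty
    · obtain ⟨x, hx, hmin⟩ := Finset.exists_min_image S q hne
      have hxP : x ∈ P := (Finset.mem_filter.1 hx).1
      have hx0 : 0 < q x := (Finset.mem_filter.1 hx).2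
      let q' : V → ℝ := fun v => max (q v - q x) 0
      have hq'v : ∀ v, q' v = max (q v - q x) 0 := fun v => rfl
      have hq'pos : ∀ v, 0 < q' v → q x < q v := by
        intro v hv
        rw [hq'v] at hv
        by_contra hcon
        rw [max_eq_right (by linarith)] at hv
        exact lt_irrefl _ hv
      have hlt : (P.filter (fun v => 0 < q' v)).card < n := by
        rw [← hcard]
        apply Finset.card_lt_card
        rw [Finset.ssubset_iff_of_subset]
        · refine ⟨x, hx, ?_⟩
          simp [q']
        · intro v hv
          rw [Finset.mem_filter] at hv
          exact Finset.mem_filter.2 ⟨hv.1, hx0.trans (hq'pos v hv.2)⟩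
      have h1 := ih _ hlt q' rfl (fun v _ => le_max_right _ _)
        (fun T hT hpos => hS T hT fun v hv => hx0.trans (hq'pos v (hpos v hv)))
      have h2 := hS S (Finset.filter_subset _ _) (fun v hv => (Finset.mem_filter.1 hv).2)
      have hz : ∀ v ∈ P, v ∉ S → q v = 0 := by
        intro v hv hvS
        have : ¬ 0 < q v := fun h => hvS (Finset.mem_filter.2 ⟨hv, h⟩)
        exact le_antisymm (not_lt.1 this) (hq v hv)
      have e1 : ∑ v ∈ P, deg w v * q v = ∑ v ∈ P, deg w v * q' v + q x * vol w S := by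
        have : vol w S = ∑ v ∈ P, if v ∈ S then deg w v else 0 := by
          rw [vol, ← Finset.sum_filter]
          congr 1
          ext v; simp [hSdef]
        rw [this, Finset.mul_sum, ← Finset.sum_add_distrib]
        refine Finset.sum_congr rfl fun v hv => ?_
        by_cases hvS : v ∈ S
        · have := hmin v hvS
          rw [hq'v, max_eq_left (by linarith), if_pos hvS]; ring
        · rw [hq'v, hz v hv hvS, max_eq_right (by linarith), if_neg hvS]; ring
      have e2 : ∑ u ∈ P, ∑ v ∈ P, w u v * max (q u - q v) 0
          = ∑ u ∈ P, ∑ v ∈ P, w u v * max (q' u - q' v) 0 + q x * ct w S (P \ S) := by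
        have : ct w S (P \ S) = ∑ u ∈ P, ∑ v ∈ P, if u ∈ S ∧ v ∉ S then w u v else 0 := by
          have hSP : S ⊆ P := Finset.filter_subset _ _
          rw [ct, ← Finset.sum_subset hSP]
          · refine Finset.sum_congr rfl fun u hu => ?_
            rw [Finset.sdiff_eq_filter, Finset.sum_filter]
            exact Finset.sum_congr rfl fun v hv => by simp [hu]
          · intro u _ hu
            simp [hu]
        rw [this, Finset.mul_sum, ← Finset.sum_add_distrib]
        refine Finset.sum_congr rfl fun u hu => ?_
        rw [Finset.mul_sum, ← Finset.sum_add_distrib]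
        refine Finset.sum_congr rfl fun v hv => ?_
        by_cases huS : u ∈ S
        · have a1 := hmin u huS
          have b1 : q' u = q u - q x := max_eq_left (by linarith)
          by_cases hvS : v ∈ S
          · have a2 := hmin v hvS
            have b2 : q' v = q v - q x := max_eq_left (by linarith)
            rw [b1, b2]; simp [hvS]
          · have b2 : q' v = 0 := by rw [hq'v, hz v hv hvS]; exact max_eq_right (by linarith)
            rw [b1, b2, hz v hv hvS, max_eq_left (by linarith), max_eq_left (by linarith),
              if_pos ⟨huS, hvS⟩]; ring
        · have b1 : q' u = 0 := by rw [hq'v, hz u hu huS]; exact max_eq_right (by linarith)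
          have a2 := hq v hv
          have a3 : 0 ≤ q' v := le_max_right _ _
          rw [b1, hz u hu huS, max_eq_right (by linarith), max_eq_right (by linarith)]
          simp [huS]
      rw [e1, e2]
      nlinarith [mul_le_mul_of_nonneg_left h2 hx0.le]
    · have hz : ∀ v ∈ P, q v = 0 := by
        intro v hv
        have : ¬ 0 < q v := fun h => hne ⟨v, Finset.mem_filter.2 ⟨hv, h⟩⟩
        exact le_antisymm (not_lt.1 this) (hq v hv)
      rw [Finset.sum_eq_zero (fun v hv => by rw [hz v hv, mul_zero]),
        Finset.sum_eq_zero (fun u hu => Finset.sum_eq_zero fun v hv => by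
          rw [hz v hv, hz u hu]; simp)]
      simp

lemma half_cheeger {V : Type} [Fintype V] [DecidableEq V] (w : V → V → ℝ)
    (hs : ∀ u v, w u v = w v u) (hn : ∀ u v, 0 ≤ w u v)
    (P : Finset V) (α : ℝ) (hα : 0 ≤ α) (h : V → ℝ) (hh : ∀ v, 0 ≤ h v)
    (hS : ∀ S ⊆ P, (∀ v ∈ S, 0 < h v) → α * vol w S ≤ ct w S (P \ S)) :
    α ^ 2 / 2 * ∑ v ∈ P, deg w v * h v ^ 2
      ≤ ∑ u ∈ P, ∑ v ∈ P, w u v * (h u - h v) ^ 2 / 2 := by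
  have h1 := layer w P α _ (fun v => h v ^ 2) rfl (fun v _ => sq_nonneg _)
    (fun S hSP hpos => hS S hSP fun v hv =>
      lt_of_le_of_ne (hh v) fun h0 => by have := hpos v hv; simp [← h0] at this)
  set N := ∑ v ∈ P, deg w v * h v ^ 2 with hN
  set X := ∑ u ∈ P, ∑ v ∈ P, w u v * max (h u ^ 2 - h v ^ 2) 0 with hX
  have hX2 : X = ∑ u ∈ P, ∑ v ∈ P, w u v * max (h v ^ 2 - h u ^ 2) 0 := by
    rw [hX, Finset.sum_comm]
    exact Finset.sum_congr rfl fun u _ => Finset.sum_congr rfl fun v _ => by rw [hs]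
  have hpt : α * (X + X) ≤ ∑ u ∈ P, ∑ v ∈ P, (2 * (w u v * (h u - h v) ^ 2 / 2)
      + α ^ 2 / 2 * (w u v * h u ^ 2) + α ^ 2 / 2 * (w u v * h v ^ 2)) := by
    nth_rewrite 2 [hX2]
    rw [hX]
    simp only [← Finset.sum_add_distrib, Finset.mul_sum]
    refine Finset.sum_le_sum fun u _ => Finset.sum_le_sum fun v _ => ?_
    have key : α * (max (h u ^ 2 - h v ^ 2) 0 + max (h v ^ 2 - h u ^ 2) 0)
        ≤ (h u - h v) ^ 2 + α ^ 2 / 2 * h u ^ 2 + α ^ 2 / 2 * h v ^ 2 := by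
      rcases le_total (h u ^ 2) (h v ^ 2) with hle | hle
      · rw [max_eq_right (by linarith), max_eq_left (by linarith)]
        nlinarith [sq_nonneg ((h v - h u) - α / 2 * (h v + h u)),
          mul_nonneg (sq_nonneg α) (sq_nonneg (h u - h v))]
      · rw [max_eq_left (by linarith), max_eq_right (by linarith)]
        nlinarith [sq_nonneg ((h u - h v) - α / 2 * (h v + h u)),
          mul_nonneg (sq_nonneg α) (sq_nonneg (h u - h v))]
    nlinarith [mul_le_mul_of_nonneg_left key (hn u v)]
  have hA : ∑ u ∈ P, ∑ v ∈ P, w u v * h u ^ 2 ≤ N := by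
    rw [hN]
    refine Finset.sum_le_sum fun u _ => ?_
    rw [← Finset.sum_mul]
    refine mul_le_mul_of_nonneg_right ?_ (sq_nonneg _)
    exact Finset.sum_le_sum_of_subset_of_nonneg (Finset.subset_univ _) fun _ _ _ => hn _ _
  have hB : ∑ u ∈ P, ∑ v ∈ P, w u v * h v ^ 2 ≤ N := by
    refine le_trans (le_of_eq ?_) hA
    rw [Finset.sum_comm]
    exact Finset.sum_congr rfl fun u _ => Finset.sum_congr rfl fun v _ => by rw [hs]
  simp only [Finset.sum_add_distrib, ← Finset.mul_sum] at hpt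
  have h2 := mul_le_mul_of_nonneg_left h1 hα
  have h3 := mul_le_mul_of_nonneg_left hA (sq_nonneg α)
  have h4 := mul_le_mul_of_nonneg_left hB (sq_nonneg α)
  nlinarith

lemma exists_median {V : Type} [DecidableEq V] (P : Finset V) (hP : P.Nonempty)
    (d : V → ℝ) (hd : ∀ v, 0 ≤ d v) (f : V → ℝ) :
    ∃ m, ∑ v ∈ P.filter (fun v => m < f v), d v ≤ (∑ v ∈ P, d v) / 2 ∧
      ∑ v ∈ P.filter (fun v => f v < m), d v ≤ (∑ v ∈ P, d v) / 2 := by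
  have hD : 0 ≤ ∑ v ∈ P, d v := Finset.sum_nonneg fun v _ => hd v
  let Q := P.filter (fun x => ∑ v ∈ P.filter (fun v => f x < f v), d v ≤ (∑ v ∈ P, d v) / 2)
  have hQ : Q.Nonempty := by
    obtain ⟨x, hx, hmax⟩ := Finset.exists_max_image P f hP
    refine ⟨x, Finset.mem_filter.2 ⟨hx, ?_⟩⟩
    rw [Finset.filter_false_of_mem (fun v hv => not_lt.2 (hmax v hv))]
    simp; linarith
  obtain ⟨x, hx, hmin⟩ := Finset.exists_min_image Q f hQ
  refine ⟨f x, (Finset.mem_filter.1 hx).2, ?_⟩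
  by_cases hne : (P.filter (fun v => f v < f x)).Nonempty
  · obtain ⟨y, hy, hymax⟩ := Finset.exists_max_image _ f hne
    rw [Finset.mem_filter] at hy
    have hyQ : y ∉ Q := fun h => absurd (hmin y h) (not_le.2 hy.2)
    have h1 : (∑ v ∈ P, d v) / 2 < ∑ v ∈ P.filter (fun v => f y < f v), d v := by
      by_contra hcon
      exact hyQ (Finset.mem_filter.2 ⟨hy.1, not_lt.1 hcon⟩)
    have h2 := Finset.sum_filter_add_sum_filter_not P (fun v => f v < f x) d
    have h3 : P.filter (fun v => f y < f v) = P.filter (fun v => ¬ f v < f x) := by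
      apply Finset.filter_congr
      intro v hv
      constructor
      · intro hlt hlt2
        exact absurd (hymax v (Finset.mem_filter.2 ⟨hv, hlt2⟩)) (not_le.2 hlt)
      · intro hlt
        exact lt_of_lt_of_le hy.2 (not_lt.1 hlt)
    rw [h3] at h1
    linarith
  · rw [Finset.not_nonempty_iff_eq_empty.1 hne]
    simp; linarith

lemma cheeger_part {V : Type} [Fintype V] [DecidableEq V] (w : V → V → ℝ)
    (hs : ∀ u v, w u v = w v u) (hn : ∀ u v, 0 ≤ w u v) (hd : ∀ v, 0 < deg w v)
    (P : Finset V) (α : ℝ) (hα : 0 ≤ α)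
    (hP : ∀ S ⊆ P, α * min (vol w S) (vol w (P \ S)) ≤ ct w S (P \ S))
    (f : V → ℝ) (hf : ∑ v ∈ P, deg w v * f v = 0) :
    α ^ 2 / 2 * ∑ v ∈ P, deg w v * f v ^ 2
      ≤ ∑ u ∈ P, ∑ v ∈ P, w u v * (f u - f v) ^ 2 / 2 := by
  rcases P.eq_empty_or_nonempty with rfl | hPne
  · simp
  obtain ⟨m, hm1, hm2⟩ := exists_median P hPne (deg w) (fun v => (hd v).le) f
  have hside : ∀ S ⊆ P, vol w S ≤ (∑ v ∈ P, deg w v) / 2 → α * vol w S ≤ ct w S (P \ S) := by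
    intro S hS hle
    have h1 : vol w (P \ S) + vol w S = ∑ v ∈ P, deg w v := Finset.sum_sdiff hS
    have h2 := hP S hS
    rwa [min_eq_left (by linarith)] at h2
  have hsub : ∀ S T : Finset V, S ⊆ T → vol w S ≤ vol w T := fun S T h =>
    Finset.sum_le_sum_of_subset_of_nonneg h fun v _ _ => (hd v).le
  have h1 := half_cheeger w hs hn P α hα (fun v => max (f v - m) 0) (fun v => le_max_right _ _)
    (fun S hS hpos => hside S hS (le_trans (hsub _ _ fun v hv => by
      have := hpos v hv
      simp at this
      exact Finset.mem_filter.2 ⟨hS hv, this⟩) hm1))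
  have h2 := half_cheeger w hs hn P α hα (fun v => max (m - f v) 0) (fun v => le_max_right _ _)
    (fun S hS hpos => hside S hS (le_trans (hsub _ _ fun v hv => by
      have := hpos v hv
      simp at this
      exact Finset.mem_filter.2 ⟨hS hv, this⟩) hm2))
  have e1 : ∑ v ∈ P, deg w v * f v ^ 2 ≤ ∑ v ∈ P, deg w v * max (f v - m) 0 ^ 2
      + ∑ v ∈ P, deg w v * max (m - f v) 0 ^ 2 := by
    have h3 : ∑ v ∈ P, deg w v * (f v ^ 2 + m ^ 2 - 2 * m * f v)
        = ∑ v ∈ P, deg w v * f v ^ 2 + m ^ 2 * vol w P := by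
      have : ∀ v, deg w v * (f v ^ 2 + m ^ 2 - 2 * m * f v)
          = deg w v * f v ^ 2 + m ^ 2 * deg w v - 2 * m * (deg w v * f v) := fun v => by ring
      simp only [this, Finset.sum_sub_distrib, Finset.sum_add_distrib, ← Finset.mul_sum, hf, vol]
      ring
    have h4 : ∑ v ∈ P, deg w v * (f v ^ 2 + m ^ 2 - 2 * m * f v)
        = ∑ v ∈ P, deg w v * max (f v - m) 0 ^ 2 + ∑ v ∈ P, deg w v * max (m - f v) 0 ^ 2 := by
      rw [← Finset.sum_add_distrib]
      refine Finset.sum_congr rfl fun v _ => ?_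
      rcases le_total (f v) m with hle | hle
      · rw [max_eq_right (by linarith), max_eq_left (by linarith)]; ring
      · rw [max_eq_left (by linarith), max_eq_right (by linarith)]; ring
    have := vol_pos w hd P hPne
    nlinarith [mul_nonneg (sq_nonneg m) this.le]
  have e2 : ∑ u ∈ P, ∑ v ∈ P, w u v * (max (f u - m) 0 - max (f v - m) 0) ^ 2 / 2
      + ∑ u ∈ P, ∑ v ∈ P, w u v * (max (m - f u) 0 - max (m - f v) 0) ^ 2 / 2
      ≤ ∑ u ∈ P, ∑ v ∈ P, w u v * (f u - f v) ^ 2 / 2 := by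
    simp only [← Finset.sum_add_distrib]
    refine Finset.sum_le_sum fun u _ => Finset.sum_le_sum fun v _ => ?_
    have key : (max (f u - m) 0 - max (f v - m) 0) ^ 2 + (max (m - f u) 0 - max (m - f v) 0) ^ 2
        ≤ (f u - f v) ^ 2 := by
      rcases le_total (f u) m with hu | hu <;> rcases le_total (f v) m with hv | hv
      · rw [max_eq_right (by linarith), max_eq_right (by linarith), max_eq_left (by linarith),
          max_eq_left (by linarith)]; nlinarith
      · rw [max_eq_right (by linarith), max_eq_left (by linarith), max_eq_left (by linarith),
          max_eq_right (by linarith)]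
        nlinarith [mul_nonneg (sub_nonneg.2 hu) (sub_nonneg.2 hv)]
      · rw [max_eq_left (by linarith), max_eq_right (by linarith), max_eq_right (by linarith),
          max_eq_left (by linarith)]
        nlinarith [mul_nonneg (sub_nonneg.2 hu) (sub_nonneg.2 hv)]
      · rw [max_eq_left (by linarith), max_eq_left (by linarith), max_eq_right (by linarith),
          max_eq_right (by linarith)]; nlinarith
    nlinarith [mul_le_mul_of_nonneg_left key (hn u v)]
  have e3 := mul_le_mul_of_nonneg_left e1 (by positivity : 0 ≤ α ^ 2 / 2)
  linarith

/-- a partition into `j` expanders forces `λ_{j+1}` to be large. -/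
lemma lam_ge_of_partition {V : Type} [Fintype V] [DecidableEq V] (w : V → V → ℝ)
    (hs : ∀ u v, w u v = w v u) (hn : ∀ u v, 0 ≤ w u v) (hd : ∀ v, 0 < deg w v)
    (j : ℕ) (hj : j < Fintype.card V) (p : V → Fin j) (α : ℝ) (hα : 0 ≤ α)
    (hP : ∀ i, ∀ S ⊆ Finset.univ.filter (fun v => p v = i),
      α * min (vol w S) (vol w (Finset.univ.filter (fun v => p v = i) \ S))
        ≤ ct w S (Finset.univ.filter (fun v => p v = i) \ S)) :
    α ^ 2 / 2 ≤ lam w (j + 1) := by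
  obtain ⟨f, hf, hz, hle⟩ := lam_lower w hs hd j hj (fun i v => if p v = i then deg w v else 0)
  have h1 : ∀ i, α ^ 2 / 2 * ∑ v ∈ Finset.univ.filter (fun v => p v = i), deg w v * f v ^ 2
      ≤ ∑ u ∈ Finset.univ.filter (fun v => p v = i),
        ∑ v ∈ Finset.univ.filter (fun v => p v = i), w u v * (f u - f v) ^ 2 / 2 := by
    intro i
    refine cheeger_part w hs hn hd _ α hα (hP i) f ?_
    rw [Finset.sum_filter]
    refine Eq.trans (Finset.sum_congr rfl fun v _ => ?_) (hz i)
    split_ifs <;> simp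
  have h2 : ∑ v, deg w v * f v ^ 2
      = ∑ i, ∑ v ∈ Finset.univ.filter (fun v => p v = i), deg w v * f v ^ 2 :=
    (Finset.sum_fiberwise _ _ _).symm
  have h3 : ∑ i, ∑ u ∈ Finset.univ.filter (fun v => p v = i),
        ∑ v ∈ Finset.univ.filter (fun v => p v = i), w u v * (f u - f v) ^ 2 / 2 ≤ dir w f := by
    rw [dir, ← Finset.sum_fiberwise _ p]
    refine Finset.sum_le_sum fun i _ => Finset.sum_le_sum fun u _ => ?_
    exact Finset.sum_le_sum_of_subset_of_nonneg (Finset.subset_univ _)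
      fun v _ _ => by have := hn u v; positivity
  refine le_of_mul_le_mul_right ?_ (norm_pos w hd f hf)
  refine le_trans ?_ hle
  rw [h2, Finset.mul_sum]
  exact (Finset.sum_le_sum fun i _ => h1 i).trans h3

/-- `k` disjoint nonempty sets of conductance at most `r`. -/
def SmallFam {V : Type} [Fintype V] [DecidableEq V] (w : V → V → ℝ) (k : ℕ) (r : ℝ) : Prop :=
  ∃ A : Fin k → Finset V, (∀ i, (A i).Nonempty) ∧ (∀ i j, i ≠ j → Disjoint (A i) (A j)) ∧
    ∀ i, phi w (A i) ≤ r

lemma minimal_cores {V : Type} [Fintype V] [DecidableEq V] (w : V → V → ℝ) (k : ℕ) (r : ℝ)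
    (h : SmallFam w k r) :
    ∃ A : Fin k → Finset V, (∀ i, (A i).Nonempty) ∧ (∀ i j, i ≠ j → Disjoint (A i) (A j)) ∧
    (∀ i, phi w (A i) ≤ r) ∧
    ∀ i, ∀ B ⊆ A i, B ≠ A i → B.Nonempty → r < phi w B := by
  classical
  let Q : Finset (Fin k → Finset V) := Finset.univ.filter (fun A =>
    (∀ i, (A i).Nonempty) ∧ (∀ i j, i ≠ j → Disjoint (A i) (A j)) ∧ ∀ i, phi w (A i) ≤ r)
  have hQ : Q.Nonempty := by
    obtain ⟨A, hA⟩ := h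
    exact ⟨A, Finset.mem_filter.2 ⟨Finset.mem_univ _, hA⟩⟩
  obtain ⟨A, hA, hmin⟩ := Finset.exists_min_image Q (fun A => ∑ i, (A i).card) hQ
  obtain ⟨-, hne, hdis, hphi⟩ := Finset.mem_filter.1 hA
  refine ⟨A, hne, hdis, hphi, fun i B hB hBne hBn => ?_⟩
  by_contra hcon
  have hsub : ∀ j, Function.update A i B j ⊆ A j := by
    intro j
    by_cases hj : j = i
    · subst hj; simpa using hB
    · simp [hj]
  have hmem : Function.update A i B ∈ Q := by
    refine Finset.mem_filter.2 ⟨Finset.mem_univ _, fun j => ?_, fun j l hjl => ?_, fun j => ?_⟩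
    · by_cases hj : j = i
      · subst hj; simpa using hBn
      · simpa [hj] using hne j
    · exact Finset.disjoint_of_subset_left (hsub j)
        (Finset.disjoint_of_subset_right (hsub l) (hdis j l hjl))
    · by_cases hj : j = i
      · subst hj; simpa using hcon
      · simpa [hj] using hphi j
  have h1 := hmin _ hmem
  have h2 : ∑ j, (Function.update A i B j).card < ∑ j, (A j).card := by
    refine Finset.sum_lt_sum (fun j _ => Finset.card_le_card (hsub j)) ⟨i, Finset.mem_univ _, ?_⟩
    simp only [Function.update_self]
    exact Finset.card_lt_card (Finset.ssubset_iff_subset_ne.2 ⟨hB, hBne⟩)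
  omega

/-- the class of `i` -/
def cls {V : Type} [Fintype V] {k : ℕ} (p : V → Fin k) (i : Fin k) : Finset V :=
  Finset.univ.filter (fun v => p v = i)

lemma mem_cls {V : Type} [Fintype V] {k : ℕ} (p : V → Fin k) (i : Fin k) (v : V) :
    v ∈ cls p i ↔ p v = i := by simp [cls]

lemma min_partition {V : Type} [Fintype V] [DecidableEq V] (w : V → V → ℝ)
    (hs : ∀ u v, w u v = w v u) (k : ℕ) (hk : 1 ≤ k)
    (A : Fin k → Finset V) (hdis : ∀ i j, i ≠ j → Disjoint (A i) (A j)) :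
    ∃ p : V → Fin k, (∀ i, A i ⊆ cls p i) ∧
      ∀ i j, ∀ S ⊆ cls p i, Disjoint S (A i) → ct w S (cls p j \ S) ≤ ct w S (cls p i \ S) := by
  classical
  let Q : Finset (V → Fin k) := Finset.univ.filter (fun p => ∀ i, A i ⊆ cls p i)
  have hQ : Q.Nonempty := by
    refine ⟨fun v => if h : ∃ i, v ∈ A i then h.choose else ⟨0, hk⟩,
      Finset.mem_filter.2 ⟨Finset.mem_univ _, fun i v hv => ?_⟩⟩
    rw [mem_cls]
    have h : ∃ i, v ∈ A i := ⟨i, hv⟩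
    rw [dif_pos h]
    by_contra hcon
    exact Finset.disjoint_left.1 (hdis _ _ hcon) h.choose_spec hv
  obtain ⟨p, hp, hmin⟩ := Finset.exists_min_image Q
    (fun p => ∑ u, ∑ v, w u v * (if p u = p v then 0 else 1)) hQ
  have hpA := (Finset.mem_filter.1 hp).2
  refine ⟨p, hpA, fun i j S hS hSA => ?_⟩
  by_cases hij : i = j
  · rw [hij]
  let p' : V → Fin k := fun v => if v ∈ S then j else p v
  have hSd : ∀ l, Disjoint S (A l) := by
    intro l
    by_cases hl : l = i
    · rw [hl]; exact hSA
    · rw [Finset.disjoint_left]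
      intro v hv hvl
      have h1 := (mem_cls _ _ _).1 (hS hv)
      have h2 := (mem_cls _ _ _).1 (hpA l hvl)
      exact hl (h2.symm.trans h1)
  have hmem : p' ∈ Q := by
    refine Finset.mem_filter.2 ⟨Finset.mem_univ _, fun l v hv => ?_⟩
    rw [mem_cls]
    have : v ∉ S := fun h => Finset.disjoint_left.1 (hSd l) h hv
    simp only [p', if_neg this]
    exact (mem_cls _ _ _).1 (hpA l hv)
  have h1 := hmin p' hmem
  let a : V → ℝ := fun v => if v ∈ S then 1 else 0
  let b : V → ℝ := fun v => (if v ∈ cls p i \ S then 1 else 0) - (if v ∈ cls p j \ S then 1 else 0)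
  have hpt : ∀ u v, w u v * (if p' u = p' v then 0 else 1)
      = w u v * (if p u = p v then 0 else 1) + (w u v * (a u * b v) + w u v * (b u * a v)) := by
    intro u v
    have hSi : ∀ x ∈ S, p x = i := fun x hx => (mem_cls _ _ _).1 (hS hx)
    have hji : ¬ j = i := fun h => hij h.symm
    by_cases hu : u ∈ S <;> by_cases hv : v ∈ S
    · simp [p', a, b, hu, hv, hSi u hu, hSi v hv]
    · by_cases h1 : p v = i
      · simp [p', a, b, hu, hv, hSi u hu, mem_cls, h1, hij, hji]
      · by_cases h2 : p v = j
        · simp [p', a, b, hu, hv, hSi u hu, mem_cls, h2, hij, hji]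
        · have h3 : ¬ i = p v := fun h => h1 h.symm
          have h4 : ¬ j = p v := fun h => h2 h.symm
          simp [p', a, b, hu, hv, hSi u hu, mem_cls, h1, h2, h3, h4]
    · by_cases h1 : p u = i
      · simp [p', a, b, hu, hv, hSi v hv, mem_cls, h1, hij, hji]
      · by_cases h2 : p u = j
        · simp [p', a, b, hu, hv, hSi v hv, mem_cls, h2, hij, hji]
        · simp [p', a, b, hu, hv, hSi v hv, mem_cls, h1, h2]
    · simp [p', a, b, hu, hv]
  simp only [hpt, Finset.sum_add_distrib] at h1
  have hsym : ∑ u, ∑ v, w u v * (b u * a v) = ∑ u, ∑ v, w u v * (a u * b v) := by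
    rw [Finset.sum_comm]
    exact Finset.sum_congr rfl fun u _ => Finset.sum_congr rfl fun v _ => by rw [hs]; ring
  have hval : ∑ u, ∑ v, w u v * (a u * b v) = ct w S (cls p i \ S) - ct w S (cls p j \ S) := by
    have hc : ∀ T : Finset V, ct w S T = ∑ u, ∑ v, w u v * (a u * if v ∈ T then 1 else 0) := by
      intro T
      rw [ct, ← Finset.sum_subset (Finset.subset_univ S)]
      · refine Finset.sum_congr rfl fun u hu => ?_
        rw [← Finset.sum_subset (Finset.subset_univ T)]
        · exact Finset.sum_congr rfl fun v hv => by simp [a, hu, hv]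
        · intro v _ hv; simp [hv]
      · intro u _ hu
        simp [a, hu]
    rw [hc, hc]
    simp only [← Finset.sum_sub_distrib]
    exact Finset.sum_congr rfl fun u _ => Finset.sum_congr rfl fun v _ => by simp only [b]; ring
  rw [hsym, hval] at h1
  linarith

lemma ct_cls_le {V : Type} [Fintype V] [DecidableEq V] (w : V → V → ℝ) (k : ℕ)
    (p : V → Fin k) (i : Fin k) (S : Finset V)
    (h : ∀ j, ct w S (cls p j \ S) ≤ ct w S (cls p i \ S)) :
    ct w S (Finset.univ \ S) ≤ k * ct w S (cls p i \ S) := by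
  have h1 : ct w S (Finset.univ \ S) = ∑ j, ct w S (cls p j \ S) := by
    simp only [ct]
    rw [Finset.sum_comm (s := (Finset.univ : Finset (Fin k)))]
    refine Finset.sum_congr rfl fun u _ => ?_
    rw [← Finset.sum_fiberwise _ p]
    refine Finset.sum_congr rfl fun j _ => ?_
    congr 1
    ext v; simp [mem_cls, and_comm]
  rw [h1]
  refine (Finset.sum_le_sum fun j _ => h j).trans ?_
  simp

lemma le_phi {V : Type} [Fintype V] [DecidableEq V] (w : V → V → ℝ) (hd : ∀ v, 0 < deg w v)
    (S : Finset V) (R : ℝ) (h : R ≤ phi w S) : R * vol w S ≤ ct w S (Finset.univ \ S) := by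
  rcases S.eq_empty_or_nonempty with rfl | hS
  · simp [vol, ct]
  · exact (le_div_iff₀ (vol_pos w hd S hS)).1 h

lemma phi_nonneg {V : Type} [Fintype V] [DecidableEq V] (w : V → V → ℝ)
    (hn : ∀ u v, 0 ≤ w u v) (S : Finset V) : 0 ≤ phi w S :=
  div_nonneg (ct_nonneg w hn _ _) (ct_nonneg w hn _ _)

lemma vol_union {V : Type} [Fintype V] [DecidableEq V] (w : V → V → ℝ) (S T : Finset V)
    (h : Disjoint S T) : vol w (S ∪ T) = vol w S + vol w T := Finset.sum_union h

/-- the main splitting estimate. -/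
lemma split_bound {V : Type} [Fintype V] [DecidableEq V] (w : V → V → ℝ)
    (hs : ∀ u v, w u v = w v u) (hn : ∀ u v, 0 ≤ w u v) (hd : ∀ v, 0 < deg w v)
    (k : ℕ) (hk : 1 ≤ k) (r R ε : ℝ) (hr : 0 ≤ r) (hε : 0 < ε) (hε1 : ε ≤ 1)
    (hR : (1 + ε) * r ≤ R) (A X Y : Finset V) (hXY : Disjoint X Y) (hA : A ⊆ X ∪ Y)
    (hAr : phi w A ≤ r) (hX : R ≤ phi w (X ∩ A)) (hY : r ≤ phi w (Y ∩ A))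
    (hAne : A.Nonempty)
    (hXP : R * vol w (X \ A) ≤ k * ct w (X \ A) ((X ∪ Y) \ (X \ A))) :
    ε * R / (8 * k) * vol w X ≤ ct w X Y := by
  have hk1 : (1 : ℝ) ≤ k := by exact_mod_cast hk
  set XB := X ∩ A with hXB
  set YB := Y ∩ A with hYB
  set XP := X \ A with hXPd
  set O := Finset.univ \ A with hO
  have hXYB : Disjoint XB YB := Finset.disjoint_of_subset_left Finset.inter_subset_left
    (Finset.disjoint_of_subset_right Finset.inter_subset_left hXY)
  have hAeq : A = XB ∪ YB := by
    rw [hXB, hYB, ← Finset.union_inter_distrib_right, Finset.inter_eq_right.2 hA]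
  have c1 : Finset.univ \ XB = YB ∪ O := by
    ext v
    have h1 := @hA v
    have h2 : v ∈ X → v ∉ Y := fun h => Finset.disjoint_left.1 hXY h
    simp only [hXB, hYB, hO, mem_union, mem_inter, mem_sdiff, mem_univ] at *
    tauto
  have c2 : Finset.univ \ YB = XB ∪ O := by
    ext v
    have h1 := @hA v
    have h2 : v ∈ X → v ∉ Y := fun h => Finset.disjoint_left.1 hXY h
    simp only [hXB, hYB, hO, mem_union, mem_inter, mem_sdiff, mem_univ] at *
    tauto
  have c3 : (X ∪ Y) \ XP = XB ∪ Y := by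
    ext v
    have h1 := @hA v
    have h2 : v ∈ X → v ∉ Y := fun h => Finset.disjoint_left.1 hXY h
    simp only [hXB, hXPd, mem_union, mem_inter, mem_sdiff] at *
    tauto
  have c4 : X = XB ∪ XP := by
    ext v
    simp only [hXB, hXPd, mem_union, mem_inter, mem_sdiff] at *
    tauto
  have dO : ∀ B : Finset V, B ⊆ A → Disjoint B O := fun B hB =>
    Finset.disjoint_of_subset_left hB Finset.disjoint_sdiff
  have sXB : XB ⊆ A := Finset.inter_subset_right
  have sYB : YB ⊆ A := Finset.inter_subset_right
  have dXX : Disjoint XB XP := by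
    rw [Finset.disjoint_left]; intro v h1 h2
    exact (Finset.mem_sdiff.1 h2).2 (sXB h1)
  have f1 := le_phi w hd XB R hX
  have f2 := le_phi w hd YB r hY
  have f3 : ct w A O ≤ r * vol w A := (div_le_iff₀ (vol_pos w hd A hAne)).1 hAr
  rw [c1, ct_union_right _ _ _ _ (dO _ sYB)] at f1
  rw [c2, ct_union_right _ _ _ _ (dO _ sXB), ct_comm w hs YB XB] at f2
  have f4 : ct w A O = ct w XB O + ct w YB O := by
    rw [← ct_union_left _ _ _ _ hXYB, ← hAeq]
  have f5 : vol w A = vol w XB + vol w YB := by rw [← vol_union _ _ _ hXYB, ← hAeq]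
  have f6 : vol w X = vol w XB + vol w XP := by rw [← vol_union _ _ _ dXX, ← c4]
  have f7 : ct w X Y = ct w XB Y + ct w XP Y := by rw [← ct_union_left _ _ _ _ dXX, ← c4]
  rw [c3, ct_union_right _ _ _ _ (Finset.disjoint_of_subset_left Finset.inter_subset_left hXY)]
    at hXP
  have f8 : ct w XP XB ≤ ct w XB O := by
    rw [ct_comm w hs]
    refine ct_mono w hn (Finset.Subset.refl _) ?_
    intro v hv
    simp only [hXPd, hO, mem_sdiff, mem_univ] at *
    tauto
  have f9 : ct w XB YB ≤ ct w XB Y :=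
    ct_mono w hn (Finset.Subset.refl _) Finset.inter_subset_left
  have nx := ct_nonneg w hn XB YB
  have ny := ct_nonneg w hn XP XB
  have nz := ct_nonneg w hn XP Y
  have nva : 0 ≤ vol w XB := ct_nonneg w hn _ _
  rw [f4, f5] at f3
  rw [f6, f7]
  generalize ct w XB YB = x at *
  generalize ct w XB O = pp at *
  generalize ct w YB O = qq at *
  generalize ct w XP XB = y at *
  generalize ct w XP Y = z at *
  generalize ct w XB Y = t at *
  generalize vol w XB = a at *
  generalize vol w YB = b at *
  generalize vol w XP = c at *
  -- 2x ≥ x + pp - r a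
  have g1 : x + pp - r * a ≤ 2 * x := by linarith
  have g2 : (1 + ε) * (r * a) ≤ x + pp := by
    nlinarith [mul_le_mul_of_nonneg_right hR nva]
  have npp : 0 ≤ x + pp := by
    have : 0 ≤ r * a := mul_nonneg hr nva
    nlinarith
  have g3 : ε * (x + pp) ≤ 4 * x := by
    nlinarith [mul_le_mul_of_nonneg_left g1 (by linarith : (0:ℝ) ≤ 1 + ε)]
  have g4 : ε * (R * a) ≤ 4 * x := le_trans (mul_le_mul_of_nonneg_left f1 hε.le) g3
  have g5 : ε * y ≤ 4 * x := le_trans (mul_le_mul_of_nonneg_left (by linarith) hε.le) g3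
  have g6 : ε * (R * c) ≤ k * (4 * x + z) := by
    have h1 := mul_le_mul_of_nonneg_left hXP hε.le
    have h2 : ε * (y + z) ≤ 4 * x + z := by nlinarith
    calc ε * (R * c) ≤ ε * (k * (y + z)) := h1
      _ = k * (ε * (y + z)) := by ring
      _ ≤ _ := mul_le_mul_of_nonneg_left h2 (by linarith)
  have g7 : ε * R * (a + c) ≤ 8 * k * (t + z) := by
    have e1 : 4 * x ≤ k * (4 * x) := by nlinarith
    have e2 : (k : ℝ) * x ≤ k * t := mul_le_mul_of_nonneg_left f9 (by linarith)
    have e3 : 0 ≤ (k : ℝ) * z := mul_nonneg (by linarith) nz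
    nlinarith
  rw [div_mul_eq_mul_div, div_le_iff₀ (by linarith)]
  linarith

lemma sum_partition {V : Type} [Fintype V] [DecidableEq V] (w : V → V → ℝ)
    (hs : ∀ u v, w u v = w v u) (hn : ∀ u v, 0 ≤ w u v) (hd : ∀ v, 0 < deg w v)
    (k : ℕ) (hk : 1 ≤ k) (r R ε : ℝ) (hr : 0 ≤ r) (hε : 0 < ε) (hε1 : ε ≤ 1)
    (hR : (1 + ε) * r ≤ R) (hsm : SmallFam w k r)
    (hbig : ∀ A : Fin (k + 1) → Finset V, (∀ i, (A i).Nonempty) →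
      (∀ i j, i ≠ j → Disjoint (A i) (A j)) → ∃ i, R ≤ phi w (A i)) :
    ∃ p : V → Fin k, (∀ i, (cls p i).Nonempty) ∧ (∀ i, phi w (cls p i) ≤ k * r) ∧
      ∀ i, ∀ S ⊆ cls p i, ε * R / (8 * k) * min (vol w S) (vol w (cls p i \ S))
        ≤ ct w S (cls p i \ S) := by
  have hk1 : (1 : ℝ) ≤ k := by exact_mod_cast hk
  have hR0 : 0 ≤ R := le_trans (by positivity) hR
  obtain ⟨A, hne, hdis, hphi, hmin⟩ := minimal_cores w k r hsm
  obtain ⟨p, hpA, hp⟩ := min_partition w hs k hk A hdis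
  -- if phi (A j) ≥ R for some j then R = 0
  have hAR : ∀ j, R ≤ phi w (A j) → R = 0 := by
    intro j hj
    have h1 : R ≤ r := hj.trans (hphi j)
    nlinarith
  -- a set disjoint from the cores
  have hout : ∀ i, ∀ S ⊆ cls p i, Disjoint S (A i) → S.Nonempty → R ≤ phi w S := by
    intro i S hS hSA hSn
    have hSd : ∀ l, Disjoint S (A l) := by
      intro l
      by_cases hl : l = i
      · rw [hl]; exact hSA
      · rw [Finset.disjoint_left]
        intro v hv hvl
        have h1 := (mem_cls _ _ _).1 (hS hv)
        have h2 := (mem_cls _ _ _).1 (hpA l hvl)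
        exact hl (h2.symm.trans h1)
    obtain ⟨j, hj⟩ := hbig (Fin.cons S A)
      (by
        intro j
        refine Fin.cases ?_ (fun j => ?_) j
        · simpa using hSn
        · simpa using hne j)
      (by
        intro j l
        refine Fin.cases ?_ (fun j => ?_) j <;> refine Fin.cases ?_ (fun l => ?_) l
        · simp
        · intro _; simpa using hSd l
        · intro _; simpa using (hSd j).symm
        · intro h; simpa using hdis j l (fun h' => h (by rw [h'])))
    revert hj
    refine Fin.cases ?_ (fun j => ?_) j
    · intro hj; simpa using hj
    · intro hj
      rw [Fin.cons_succ] at hj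
      rw [hAR j hj]; exact phi_nonneg w hn S
  have hout2 : ∀ i, ∀ S ⊆ cls p i, Disjoint S (A i) →
      R * vol w S ≤ k * ct w S (cls p i \ S) := by
    intro i S hS hSA
    rcases S.eq_empty_or_nonempty with rfl | hSn
    · simp [vol, ct]
    exact (le_phi w hd S R (hout i S hS hSA hSn)).trans
      (ct_cls_le w k p i S (fun j => hp i j S hS hSA))
  -- splitting a core
  have hsplit : ∀ i, ∀ B C : Finset V, Disjoint B C → B ∪ C = A i → B.Nonempty → C.Nonempty →
      R ≤ phi w B ∨ R ≤ phi w C := by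
    intro i B C hBC hU hB hC
    have hBs : B ⊆ A i := hU ▸ Finset.subset_union_left
    have hCs : C ⊆ A i := hU ▸ Finset.subset_union_right
    have hsub : ∀ j, Function.update A i C j ⊆ A j := by
      intro j
      by_cases hj : j = i
      · subst hj; simpa using hCs
      · simp [hj]
    have hBd : ∀ l, Disjoint B (Function.update A i C l) := by
      intro l
      by_cases hl : l = i
      · subst hl; simpa using hBC
      · simp only [ne_eq, hl, not_false_eq_true, Function.update_of_ne]
        exact Finset.disjoint_of_subset_left hBs (hdis i l (fun h => hl h.symm))
    obtain ⟨j, hj⟩ := hbig (Fin.cons B (Function.update A i C))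
      (by
        intro j
        refine Fin.cases ?_ (fun j => ?_) j
        · simpa using hB
        · rw [Fin.cons_succ]
          by_cases hj : j = i
          · subst hj; simpa using hC
          · simpa [hj] using hne j)
      (by
        intro j l
        refine Fin.cases ?_ (fun j => ?_) j <;> refine Fin.cases ?_ (fun l => ?_) l
        · simp
        · intro _; simpa using hBd l
        · intro _; simpa using (hBd j).symm
        · intro h
          rw [Fin.cons_succ, Fin.cons_succ]
          exact Finset.disjoint_of_subset_left (hsub j)
            (Finset.disjoint_of_subset_right (hsub l) (hdis j l (fun h' => h (by rw [h'])))))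
    revert hj
    refine Fin.cases ?_ (fun j => ?_) j
    · intro hj; left; simpa using hj
    · intro hj
      rw [Fin.cons_succ] at hj
      by_cases hji : j = i
      · subst hji; right; simpa using hj
      · rw [Function.update_of_ne hji] at hj
        left; rw [hAR j hj]; exact phi_nonneg w hn B
  -- one-sided estimate
  have hcoef : ε * R / (8 * k) ≤ R / k := by
    rw [div_le_div_iff₀ (by linarith) (by linarith)]
    nlinarith [mul_nonneg hR0 (by linarith : (0:ℝ) ≤ k), mul_nonneg (mul_nonneg hR0 (by linarith : (0:ℝ) ≤ k)) (sub_nonneg.2 hε1)]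
  have hcoef0 : 0 ≤ ε * R / (8 * k) := by positivity
  have hempty : ∀ i, ∀ S ⊆ cls p i, Disjoint S (A i) →
      ε * R / (8 * k) * vol w S ≤ ct w S (cls p i \ S) := by
    intro i S hS hSA
    have h1 := hout2 i S hS hSA
    have h2 : 0 ≤ vol w S := ct_nonneg w hn _ _
    refine (mul_le_mul_of_nonneg_right hcoef h2).trans ?_
    rw [div_mul_eq_mul_div, div_le_iff₀ (by linarith)]
    linarith
  have hone : ∀ i, ∀ X Y : Finset V, Disjoint X Y → X ∪ Y = cls p i → (X ∩ A i).Nonempty →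
      (Y ∩ A i).Nonempty → R ≤ phi w (X ∩ A i) → ε * R / (8 * k) * vol w X ≤ ct w X Y := by
    intro i X Y hXY hU hX hY hRX
    have hYlt : r < phi w (Y ∩ A i) := by
      refine hmin i _ Finset.inter_subset_right ?_ hY
      intro heq
      obtain ⟨v, hv⟩ := hX
      have h1 := Finset.mem_inter.1 hv
      have h2 := Finset.mem_inter.1 (heq.symm ▸ h1.2 : v ∈ Y ∩ A i)
      exact Finset.disjoint_left.1 hXY h1.1 h2.1
    refine split_bound w hs hn hd k hk r R ε hr hε hε1 hR (A i) X Y hXY (hU ▸ hpA i) (hphi i)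
      hRX hYlt.le (hne i) ?_
    rw [hU]
    exact hout2 i _ (fun v hv => hU ▸ Finset.mem_union_left _ (Finset.mem_sdiff.1 hv).1)
      Finset.sdiff_disjoint
  refine ⟨p, fun i => (hne i).mono (hpA i), fun i => ?_, fun i S hS => ?_⟩
  · -- conductance
    have hPne := (hne i).mono (hpA i)
    set P := cls p i with hP
    have h1 := ct_cls_le w k p i (P \ A i)
      (fun j => hp i j _ Finset.sdiff_subset Finset.sdiff_disjoint)
    rw [← hP, Finset.sdiff_sdiff_eq_self (hpA i)] at h1
    have e1 : ct w P (Finset.univ \ P) = ct w (A i) (Finset.univ \ P)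
        + ct w (P \ A i) (Finset.univ \ P) := by
      rw [← ct_union_left _ _ _ _ Finset.disjoint_sdiff, Finset.union_sdiff_of_subset (hpA i)]
    have e2 : ct w (P \ A i) (Finset.univ \ P) ≤ ct w (P \ A i) (Finset.univ \ (P \ A i)) :=
      ct_mono w hn (Finset.Subset.refl _) (Finset.sdiff_subset_sdiff (Finset.Subset.refl _)
        Finset.sdiff_subset)
    have e3 : ct w (A i) (Finset.univ \ A i)
        = ct w (A i) (Finset.univ \ P) + ct w (P \ A i) (A i) := by
      rw [ct_comm w hs (P \ A i), ← ct_union_right]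
      · congr 1
        ext v
        have := @hpA i v
        simp only [mem_union, mem_sdiff, mem_univ, ← hP] at *
        tauto
      · rw [Finset.disjoint_left]; intro v h1 h2
        exact (Finset.mem_sdiff.1 h1).2 (Finset.mem_sdiff.1 h2).1
    have e4 : ct w (A i) (Finset.univ \ A i) ≤ r * vol w (A i) :=
      (div_le_iff₀ (vol_pos w hd _ (hne i))).1 (hphi i)
    have e5 : vol w (A i) ≤ vol w P := ct_mono w hn (hpA i) (Finset.Subset.refl _)
    have e6 : ct w P (Finset.univ \ P) ≤ k * r * vol w P := by
      have n1 := ct_nonneg w hn (A i) (Finset.univ \ P)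
      calc ct w P (Finset.univ \ P) ≤ k * ct w (A i) (Finset.univ \ A i) := by
            rw [e3]; nlinarith
        _ ≤ k * (r * vol w P) :=
            mul_le_mul_of_nonneg_left (e4.trans (mul_le_mul_of_nonneg_left e5 hr)) (by linarith)
        _ = _ := by ring
    exact (div_le_iff₀ (vol_pos w hd _ hPne)).2 e6
  · set T := cls p i \ S with hT
    have hTs : T ⊆ cls p i := Finset.sdiff_subset
    have hTT : cls p i \ T = S := Finset.sdiff_sdiff_eq_self hS
    have hST : Disjoint S T := Finset.disjoint_sdiff
    have hU : S ∪ T = cls p i := Finset.union_sdiff_of_subset hS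
    have hl : ε * R / (8 * k) * vol w S ≤ ct w S T →
        ε * R / (8 * k) * min (vol w S) (vol w T) ≤ ct w S T := fun h =>
      (mul_le_mul_of_nonneg_left (min_le_left _ _) hcoef0).trans h
    have hrr : ε * R / (8 * k) * vol w T ≤ ct w T S →
        ε * R / (8 * k) * min (vol w S) (vol w T) ≤ ct w S T := fun h => by
      rw [ct_comm w hs]
      exact (mul_le_mul_of_nonneg_left (min_le_right _ _) hcoef0).trans h
    by_cases hSA : Disjoint S (A i)
    · exact hl (hempty i S hS hSA)
    by_cases hTA : Disjoint T (A i)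
    · apply hrr
      have := hempty i T hTs hTA
      rwa [hTT] at this
    have hSn : (S ∩ A i).Nonempty := by rwa [Finset.not_disjoint_iff_nonempty_inter] at hSA
    have hTn : (T ∩ A i).Nonempty := by rwa [Finset.not_disjoint_iff_nonempty_inter] at hTA
    rcases hsplit i (S ∩ A i) (T ∩ A i) (Finset.disjoint_of_subset_left Finset.inter_subset_left
        (Finset.disjoint_of_subset_right Finset.inter_subset_left hST))
        (by rw [← Finset.union_inter_distrib_right, hU, Finset.inter_eq_right.2 (hpA i)]) hSn hTn
      with h | h
    · exact hl (hone i S T hST hU hSn hTn h)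
    · exact hrr (hone i T S hST.symm (by rw [Finset.union_comm, hU]) hTn hSn h)

lemma phi_gap {V : Type} [Fintype V] [DecidableEq V] (w : V → V → ℝ) (r : ℝ) :
    ∃ R, r < R ∧ ∀ S, r < phi w S → R ≤ phi w S := by
  classical
  by_cases h : ((Finset.univ : Finset (Finset V)).filter (fun S => r < phi w S)).Nonempty
  · obtain ⟨S, hS, hmin⟩ := Finset.exists_min_image _ (phi w) h
    exact ⟨phi w S, (Finset.mem_filter.1 hS).2,
      fun T hT => hmin T (Finset.mem_filter.2 ⟨Finset.mem_univ _, hT⟩)⟩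
  · refine ⟨r + 1, by linarith, fun S hS => ?_⟩
    exact absurd ⟨S, Finset.mem_filter.2 ⟨Finset.mem_univ _, hS⟩⟩ h

lemma small_step {V : Type} [Fintype V] [DecidableEq V] (w : V → V → ℝ)
    (hs : ∀ u v, w u v = w v u) (hn : ∀ u v, 0 ≤ w u v) (hd : ∀ v, 0 < deg w v)
    (k : ℕ) (hk : 1 ≤ k) (hkc : k ≤ Fintype.card V) (j : ℕ) (hj : j < k) :
    SmallFam w (j + 1) ((1 + 1 / (k : ℝ)) ^ j * (12 * k ^ 2 * √(lam w k))) := by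
  have hk1 : (1 : ℝ) ≤ k := by exact_mod_cast hk
  have hkpos : (0 : ℝ) < k := by linarith
  have hM : 0 ≤ 12 * (k : ℝ) ^ 2 * √(lam w k) := by positivity
  have hL : 0 ≤ lam w k := by
    have := lam_nonneg w hs hn hd (k - 1) (by omega)
    rwa [Nat.sub_add_cancel hk] at this
  induction j with
  | zero =>
    have : Nonempty V := Fintype.card_pos_iff.1 (by omega)
    refine ⟨fun _ => Finset.univ, fun _ => Finset.univ_nonempty, ?_, fun _ => ?_⟩
    · intro i j h
      exact absurd (Subsingleton.elim (α := Fin 1) i j) h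
    · have : phi w Finset.univ = 0 := by simp [phi, eW]
      rw [this]; positivity
  | succ j ih =>
    have ih := ih (by omega)
    set r := (1 + 1 / (k : ℝ)) ^ j * (12 * k ^ 2 * √(lam w k)) with hr
    have hr' : (1 + 1 / (k : ℝ)) ^ (j + 1) * (12 * k ^ 2 * √(lam w k)) = (1 + 1 / (k : ℝ)) * r := by
      rw [hr]; ring
    rw [hr']
    have hr0 : 0 ≤ r := by positivity
    by_contra hcon
    obtain ⟨R, hR, hgap⟩ := phi_gap w ((1 + 1 / (k : ℝ)) * r)
    obtain ⟨p, -, -, hp⟩ := sum_partition w hs hn hd (j + 1) (by omega) r R (1 / k) hr0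
      (by positivity) (by rw [div_le_one hkpos]; exact hk1) hR.le ih (by
        intro A hne hdis
        by_contra hno
        push Not at hno
        refine hcon ⟨A, hne, hdis, fun i => ?_⟩
        by_contra hlt
        exact absurd (hgap _ (not_le.1 hlt)) (not_le.2 (hno i)))
    have hR0 : 0 ≤ R := le_trans (by positivity) hR.le
    have h1 := lam_ge_of_partition w hs hn hd (j + 1) (by omega) p _ (by positivity) hp
    have h2 : lam w (j + 1 + 1) ≤ lam w k := by
      have := lam_mono w hs hd (j + 1) (k - 1) (by omega) (by omega)
      rwa [Nat.sub_add_cancel hk] at this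
    have h3 : 12 * (k : ℝ) ^ 2 * √(lam w k) < R := by
      refine lt_of_le_of_lt ?_ hR
      rw [← hr']
      exact le_mul_of_one_le_left hM (one_le_pow₀ (by
        have : (0:ℝ) ≤ 1 / k := by positivity
        linarith))
    have h4 : (12 / 8 : ℝ) * √(lam w k) < 1 / k * R / (8 * ((j + 1 : ℕ) : ℝ)) := by
      have hjk : ((j + 1 : ℕ) : ℝ) ≤ k := by exact_mod_cast hj.le
      have hjpos : (0 : ℝ) < ((j + 1 : ℕ) : ℝ) := by positivity
      rw [lt_div_iff₀ (by positivity), one_div, ← div_eq_inv_mul, lt_div_iff₀ hkpos]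
      refine lt_of_le_of_lt ?_ h3
      have := mul_le_mul_of_nonneg_left hjk
        (by positivity : (0:ℝ) ≤ 12 * √(lam w k) * k)
      nlinarith
    have h5 := Real.sq_sqrt hL
    have h6 := Real.sqrt_nonneg (lam w k)
    generalize 1 / (k : ℝ) * R / (8 * ((j + 1 : ℕ) : ℝ)) = α at *
    nlinarith

lemma small_of_lam {V : Type} [Fintype V] [DecidableEq V] (w : V → V → ℝ)
    (hs : ∀ u v, w u v = w v u) (hn : ∀ u v, 0 ≤ w u v) (hd : ∀ v, 0 < deg w v)
    (k : ℕ) (hk : 1 ≤ k) (hkc : k ≤ Fintype.card V) :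
    SmallFam w k (36 * k ^ 2 * √(lam w k)) := by
  have h := small_step w hs hn hd k hk hkc (k - 1) (by omega)
  rw [Nat.sub_add_cancel hk] at h
  obtain ⟨A, h1, h2, h3⟩ := h
  refine ⟨A, h1, h2, fun i => (h3 i).trans ?_⟩
  have hkpos : (0 : ℝ) < k := by exact_mod_cast hk
  have e1 : (1 + 1 / (k : ℝ)) ^ (k - 1) ≤ 3 := by
    have a0 : (1 : ℝ) ≤ 1 + 1 / (k : ℝ) := by
      have : (0:ℝ) ≤ 1 / k := by positivity
      linarith
    calc (1 + 1 / (k : ℝ)) ^ (k - 1) ≤ (1 + 1 / (k : ℝ)) ^ k :=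
          pow_le_pow_right₀ a0 (by omega)
      _ ≤ (Real.exp (1 / k)) ^ k := by
          refine pow_le_pow_left₀ (by linarith) ?_ k
          have := Real.add_one_le_exp (1 / (k : ℝ))
          linarith
      _ = Real.exp 1 := by
          rw [← Real.exp_nat_mul, mul_one_div_cancel hkpos.ne']
      _ ≤ 3 := by have := Real.exp_one_lt_d9; linarith
  calc _ ≤ 3 * (12 * (k : ℝ) ^ 2 * √(lam w k)) :=
        mul_le_mul_of_nonneg_right e1 (by positivity)
    _ = _ := by ring

theorem stmt3 :
    ∃ c₁ c₂ c₃ : ℝ, 0 < c₁ ∧ 0 < c₂ ∧ 0 < c₃ ∧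
      ∀ (V : Type) [Fintype V] [DecidableEq V] (w : V → V → ℝ),
        (∀ u v, w u v = w v u) → (∀ u v, 0 ≤ w u v) → (∀ v, 0 < deg w v) →
        ∀ k : ℕ, 1 ≤ k → k + 1 ≤ Fintype.card V →
        c₁ * (k : ℝ) ^ 2 * Real.sqrt (lam w k) ≤ lam w (k + 1) →
        ∃ P : Fin k → Finset V, (∀ i, (P i).Nonempty) ∧
          (∀ i j, i ≠ j → Disjoint (P i) (P j)) ∧
          (∀ v : V, ∃ i, v ∈ P i) ∧
          (∀ i, inCondGE w (P i) (c₂ * lam w (k + 1) / (k : ℝ)) ∧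
            phi w (P i) ≤ c₃ * (k : ℝ) ^ 3 * Real.sqrt (lam w k)) := by
  refine ⟨144, 1 / 16, 36, by norm_num, by norm_num, by norm_num, ?_⟩
  intro V _ _ w hs hn hd k hk hkc hgap
  have hkpos : (0 : ℝ) < k := by exact_mod_cast hk
  have hL := lam_nonneg w hs hn hd k (by omega)
  obtain ⟨p, hne, hphi, hexp⟩ := sum_partition w hs hn hd k hk (36 * k ^ 2 * √(lam w k))
    (lam w (k + 1) / 2) 1 (by positivity) one_pos le_rfl (by linarith)
    (small_of_lam w hs hn hd k hk (by omega)) (by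
      intro A hAne hAdis
      by_contra hno
      push Not at hno
      obtain ⟨i, hi⟩ := Finite.exists_max (fun i => phi w (A i))
      have := lam_le_of_sets w hs hn hd k (by omega) A hAne hAdis (phi w (A i)) hi
      have := hno i
      linarith)
  refine ⟨cls p, hne, ?_, fun v => ⟨p v, (mem_cls _ _ _).2 rfl⟩, fun i => ⟨?_, ?_⟩⟩
  · intro i j hij
    rw [Finset.disjoint_left]
    intro v h1 h2
    exact hij (((mem_cls _ _ _).1 h1).symm.trans ((mem_cls _ _ _).1 h2))
  · intro S hS _ _ hvol
    have h1 := hexp i S hS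
    have h2 : volIn w (cls p i) (cls p i \ S) + volIn w (cls p i) S
        = volIn w (cls p i) (cls p i) := Finset.sum_sdiff hS
    have h3 : ∀ T, volIn w (cls p i) T ≤ vol w T := fun T =>
      ct_mono w hn (Finset.Subset.refl T) (Finset.subset_univ (cls p i))
    have h4 : volIn w (cls p i) S ≤ min (vol w S) (vol w (cls p i \ S)) :=
      le_min (h3 S) (le_trans (by linarith) (h3 _))
    have h5 : 1 * (lam w (k + 1) / 2) / (8 * (k : ℝ)) = 1 / 16 * lam w (k + 1) / k := by
      field_simp; ring
    rw [h5] at h1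
    exact (mul_le_mul_of_nonneg_left h4 (by positivity)).trans h1
  · refine (hphi i).trans (le_of_eq ?_)
    ring
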